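/- arXiv:1905.02387 — 5 statements merged into one kernel-verified Lean document; each statement's English description precedes it below -/
import Mathlib

section
/- Let π ∈ K_n with n ≥ 4. The following three conditions are equivalent: (1) n = 4k for some k ≥ 1 and there exist a permutation π′ of length k and permutations π^1,…,π^k each equal to [2413] or [3142] such that π = π′[π^1,…,π^k]; concretely, for each m ∈ {1,…,k}, the entries of π in positions 4(m−1)+1,…,4m form exactly the value set {4(π′(m)−1)+1,…,4π′(m)} and, read left to right, are order-isomorphic to [2413] or to [3142]; (2) for every value a ∈ {1,…,n}, the permutation ∇*_a(π) contains a 3-block, i.e., three consecutive positions whose values are three consecutive integers; (3) π has no prince. -/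
open Equiv

/-- The Manhattan distance between two elements of `Fin n`. -/
def fdist {n : ℕ} (a b : Fin n) : ℕ := ((a : ℤ) - (b : ℤ)).natAbs

/-- A king permutation: no two adjacent positions carry adjacent values. -/
def IsKing {n : ℕ} (σ : Equiv.Perm (Fin n)) : Prop :=
  ∀ i j : Fin n, (j : ℕ) = (i : ℕ) + 1 → fdist (σ i) (σ j) ≠ 1

/-- Pattern containment `π ⪯ σ`. -/
def Contains {m n : ℕ} (π : Equiv.Perm (Fin m)) (σ : Equiv.Perm (Fin n)) : Prop :=
  ∃ f : Fin m ↪o Fin n, ∀ a b : Fin m, π a < π b ↔ σ (f a) < σ (f b)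

/-- Strict pattern containment `π ≺ σ`. -/
def StrictContains {m n : ℕ} (π : Equiv.Perm (Fin m)) (σ : Equiv.Perm (Fin n)) : Prop :=
  Contains π σ ∧ m < n

/-- `nabla σ i` deletes the `i`-th entry of `σ` and standardizes. -/
def nabla {n : ℕ} (σ : Equiv.Perm (Fin (n + 1))) (i : Fin (n + 1)) : Equiv.Perm (Fin n) :=
  Equiv.removeNone ((finSuccEquiv' i).symm.trans (σ.trans (finSuccEquiv' (σ i))))

/-- `nablaStar σ a` deletes the value `a` from `σ` and standardizes. -/
def nablaStar {n : ℕ} (σ : Equiv.Perm (Fin (n + 1))) (a : Fin (n + 1)) : Equiv.Perm (Fin n) :=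
  nabla σ (σ⁻¹ a)

/-- The permutation [2413] (0-based one-line notation [1,3,0,2]). -/
def p2413 : Equiv.Perm (Fin 4) :=
  ⟨![1, 3, 0, 2], ![2, 0, 3, 1], by intro x; fin_cases x <;> rfl, by intro x; fin_cases x <;> rfl⟩

/-- The permutation [3142] (0-based one-line notation [2,0,3,1]). -/
def p3142 : Equiv.Perm (Fin 4) :=
  ⟨![2, 0, 3, 1], ![1, 3, 0, 2], by intro x; fin_cases x <;> rfl, by intro x; fin_cases x <;> rfl⟩

/-- `σ i` vertically separates `σ j` from `σ k`. -/
def VSep {n : ℕ} (σ : Equiv.Perm (Fin n)) (i j k : Fin n) : Prop :=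
  i ≠ j ∧ i ≠ k ∧ j ≠ k ∧ fdist i j = 1 ∧ fdist i k = 1 ∧ fdist (σ j) (σ k) = 1

/-- `σ i` horizontally separates `σ j` from `σ k`. -/
def HSep {n : ℕ} (σ : Equiv.Perm (Fin n)) (i j k : Fin n) : Prop :=
  i ≠ j ∧ i ≠ k ∧ j ≠ k ∧ fdist (σ i) (σ j) = 1 ∧ fdist (σ i) (σ k) = 1 ∧ fdist j k = 1

/-- `σ i` separates `σ j` from `σ k`. -/
def Separates {n : ℕ} (σ : Equiv.Perm (Fin n)) (i j k : Fin n) : Prop :=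
  VSep σ i j k ∨ HSep σ i j k

/-- `π` has a 2-block at positions `j`, `j+1` (0-based). -/
def HasTwoBlockAt {n : ℕ} (π : Equiv.Perm (Fin n)) (j : ℕ) : Prop :=
  ∃ hj : j + 1 < n, fdist (π ⟨j, by omega⟩) (π ⟨j + 1, hj⟩) = 1

/-- `π` has a 3-block at positions `p`, `p+1`, `p+2` (0-based). -/
def HasThreeBlockAt {n : ℕ} (π : Equiv.Perm (Fin n)) (p : ℕ) : Prop :=
  ∃ hp : p + 2 < n, ∃ m : ℕ,
    ({(π ⟨p, by omega⟩ : ℕ), (π ⟨p + 1, by omega⟩ : ℕ), (π ⟨p + 2, by omega⟩ : ℕ)} : Finset ℕ)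
      = {m, m + 1, m + 2}



theorem half_core (N : ℕ) (s : ℕ → ℤ)
    (inj : ∀ i j, i < N → j < N → s i = s j → i = j)
    (king : ∀ i, i + 1 < N → s (i+1) ≠ s i + 1 ∧ s (i+1) ≠ s i - 1)
    (sep : ∀ i, i < N → (∃ j, i = j + 1 ∧ j + 2 < N ∧ (s (j+2) = s j + 1 ∨ s (j+2) = s j - 1)) ∨
      (∃ p, p + 1 < N ∧ ((s p = s i - 1 ∧ s (p+1) = s i + 1) ∨ (s p = s i + 1 ∧ s (p+1) = s i - 1))))
    (b : ℕ) (hb : b < N)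
    (h1 : ∀ c, b = c + 1 → (∃ q, q < b ∧ s q = s c + 1) ∧ (∃ q, q < b ∧ s q = s c - 1))
    (p : ℕ) (hp : p + 1 < N) (hbp : b < p) (e1 : s p = s b - 1) (e2 : s (p+1) = s b + 1) :
    b + 3 < N ∧ s (b+1) = s b + 2 ∧ s (b+2) = s b - 1 ∧ s (b+3) = s b + 1 := by
  have key1 : (p + 2 < N ∧ s (p+2) = s b - 2) ∨ s (b+1) = s b + 2 := by
    rcases sep (p+1) hp with ⟨j, hj, hj2, h⟩ | ⟨q, hq, h | h⟩
    · obtain rfl : p = j := by omega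
      rcases h with h | h
      · have := inj (p+2) b hj2 hb (by omega)
        omega
      · left; exact ⟨hj2, by omega⟩
    · obtain rfl := inj q b (by omega) hb (by omega)
      right; omega
    · have := inj (q+1) b hq hb (by omega)
      obtain ⟨⟨_, _⟩, r, hr, hr2⟩ := h1 q this.symm
      have := inj r (p+1) (by omega) hp (by omega)
      omega
  have key2 : (∃ c, p = c + 1 ∧ s c = s b + 2) ∨ s (b+1) = s b - 2 := by
    rcases sep p (by omega) with ⟨j, hj, hj2, h⟩ | ⟨q, hq, h | h⟩
    · subst hj
      have e : j + 2 = j + 1 + 1 := rfl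
      rw [e, e2] at h
      rcases h with h | h
      · have := inj j b (by omega) hb (by omega)
        subst this
        have := king j (by omega)
        omega
      · left; exact ⟨j, rfl, by omega⟩
    · have := inj (q+1) b hq hb (by omega)
      obtain ⟨⟨r, hr, hr2⟩, _, _⟩ := h1 q this.symm
      have := inj r p (by omega) (by omega) (by omega)
      omega
    · obtain rfl := inj q b (by omega) hb (by omega)
      right; omega
  have fin : ∀ c, p = c + 1 → c = b + 1 → s c = s b + 2 →
      b + 3 < N ∧ s (b+1) = s b + 2 ∧ s (b+2) = s b - 1 ∧ s (b+3) = s b + 1 := by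
    intro c h h' h''
    subst h; subst h'
    exact ⟨hp, h'', e1, e2⟩
  rcases key1 with ⟨k1, k1'⟩ | k1 <;> rcases key2 with ⟨c, k2, k2'⟩ | k2
  · -- main case C
    apply fin c k2 _ k2'
    rcases sep c (by omega) with ⟨j, hj, hj2, h⟩ | ⟨q, hq, h | h⟩
    · have e : j + 2 = p := by omega
      rw [e, e1] at h
      rcases h with h | h
      · have := inj j (p+2) (by omega) k1 (by omega)
        omega
      · have := inj j b (by omega) hb (by omega)
        omega
    · have := inj q (p+1) (by omega) hp (by omega)
      subst this
      have e : s (p + 2) = _ := h.2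
      omega
    · have := inj (q+1) (p+1) (by omega) hp (by omega)
      obtain rfl : q = p := by omega
      omega
  · have := inj (b+1) (p+2) (by omega) k1 (by omega)
    omega
  · apply fin c k2 _ k2'
    exact inj c (b+1) (by omega) (by omega) (by omega)
  · omega

theorem full_core (N : ℕ) (s : ℕ → ℤ)
    (inj : ∀ i j, i < N → j < N → s i = s j → i = j)
    (king : ∀ i, i + 1 < N → s (i+1) ≠ s i + 1 ∧ s (i+1) ≠ s i - 1)
    (sep : ∀ i, i < N → (∃ j, i = j + 1 ∧ j + 2 < N ∧ (s (j+2) = s j + 1 ∨ s (j+2) = s j - 1)) ∨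
      (∃ p, p + 1 < N ∧ ((s p = s i - 1 ∧ s (p+1) = s i + 1) ∨ (s p = s i + 1 ∧ s (p+1) = s i - 1))))
    (b : ℕ) (hb : b < N)
    (h1 : ∀ c, b = c + 1 → (∃ q, q < b ∧ s q = s c + 1) ∧ (∃ q, q < b ∧ s q = s c - 1))
    (h2 : ∀ p, p + 1 < b → ¬ ((s p = s b - 1 ∧ s (p+1) = s b + 1) ∨ (s p = s b + 1 ∧ s (p+1) = s b - 1))) :
    b + 3 < N ∧ ((s (b+1) = s b + 2 ∧ s (b+2) = s b - 1 ∧ s (b+3) = s b + 1) ∨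
      (s (b+1) = s b - 2 ∧ s (b+2) = s b + 1 ∧ s (b+3) = s b - 1)) := by
  rcases sep b hb with ⟨j, hj, hj2, h⟩ | ⟨p, hp, h⟩
  · exfalso
    obtain ⟨⟨r, hr, hr2⟩, r', hr', hr2'⟩ := h1 j hj
    rcases h with h | h
    · have := inj r (j+2) (by omega) hj2 (by omega)
      omega
    · have := inj r' (j+2) (by omega) hj2 (by omega)
      omega
  · have hbp : b < p := by
      by_contra hc
      rcases Nat.lt_or_ge (p+1) b with h3 | h3
      · exact h2 p h3 h
      · rcases (by omega : p + 1 = b ∨ p = b) with h4 | h4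
        · rw [h4] at h; omega
        · rw [h4] at h; omega
    rcases h with ⟨h, h'⟩ | ⟨h, h'⟩
    · obtain ⟨a, h⟩ := half_core N s inj king sep b hb h1 p hp hbp h h'
      exact ⟨a, Or.inl h⟩
    · obtain ⟨a, h⟩ := half_core N (fun i => - s i) (fun i j hi hj h => inj i j hi hj (by simpa using h))
        (fun i hi => by have := king i hi; omega)
        (fun i hi => by
          rcases sep i hi with ⟨j, hj, hj2, h⟩ | ⟨p, hp, h⟩
          · left; exact ⟨j, hj, hj2, by omega⟩
          · right; exact ⟨p, hp, by omega⟩) b hb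
        (fun c hc => by
          obtain ⟨⟨r, hr, hr2⟩, r', hr', hr2'⟩ := h1 c hc
          exact ⟨⟨r', hr', by omega⟩, r, hr, by omega⟩) p hp hbp (by omega) (by omega)
      exact ⟨a, Or.inr (by omega)⟩

/-- Block of length four at position `b`, with smallest value `c`. -/
def Blk (s : ℕ → ℤ) (b : ℕ) (c : ℤ) : Prop :=
  (s b = c + 1 ∧ s (b+1) = c + 3 ∧ s (b+2) = c ∧ s (b+3) = c + 2) ∨
  (s b = c + 2 ∧ s (b+1) = c ∧ s (b+2) = c + 3 ∧ s (b+3) = c + 1)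

theorem Blk.surj {s : ℕ → ℤ} {b : ℕ} {c : ℤ} (h : Blk s b c) (v : ℤ) (h1 : c ≤ v) (h2 : v ≤ c + 3) :
    ∃ r, r < 4 ∧ s (b + r) = v := by
  have : v = c ∨ v = c + 1 ∨ v = c + 2 ∨ v = c + 3 := by omega
  rcases h with ⟨a0, a1, a2, a3⟩ | ⟨a0, a1, a2, a3⟩ <;> rcases this with rfl | rfl | rfl | rfl
  exacts [⟨2, by omega, a2⟩, ⟨0, by omega, a0⟩, ⟨3, by omega, a3⟩, ⟨1, by omega, a1⟩,
    ⟨1, by omega, a1⟩, ⟨3, by omega, a3⟩, ⟨0, by omega, a0⟩, ⟨2, by omega, a2⟩]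

theorem Blk.range {s : ℕ → ℤ} {b : ℕ} {c : ℤ} (h : Blk s b c) (r : ℕ) (hr : r < 4) :
    c ≤ s (b + r) ∧ s (b+r) ≤ c + 3 := by
  rcases h with ⟨a0, a1, a2, a3⟩ | ⟨a0, a1, a2, a3⟩ <;> interval_cases r <;> simp_all

theorem all_blocks (N : ℕ) (s : ℕ → ℤ)
    (inj : ∀ i j, i < N → j < N → s i = s j → i = j)
    (king : ∀ i, i + 1 < N → s (i+1) ≠ s i + 1 ∧ s (i+1) ≠ s i - 1)
    (sep : ∀ i, i < N → (∃ j, i = j + 1 ∧ j + 2 < N ∧ (s (j+2) = s j + 1 ∨ s (j+2) = s j - 1)) ∨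
      (∃ p, p + 1 < N ∧ ((s p = s i - 1 ∧ s (p+1) = s i + 1) ∨ (s p = s i + 1 ∧ s (p+1) = s i - 1))))
    (m : ℕ) : 4 * m < N → 4 * m + 3 < N ∧ ∃ c, Blk s (4 * m) c := by
  induction m using Nat.strong_induction_on with
  | _ m ih =>
  intro hm
  have inblk : ∀ m', m' < m → ∀ c, Blk s (4 * m') c → ∀ v, c ≤ v → v ≤ c + 3 → ∃ q, q < 4 * m ∧ s q = v := by
    intro m' hm' c hc v hv hv'
    obtain ⟨r, hr, hr'⟩ := hc.surj v hv hv'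
    exact ⟨_, by omega, hr'⟩
  have := full_core N s inj king sep (4 * m) hm ?_ ?_
  · refine ⟨this.1, ?_⟩
    rcases this.2 with h | h
    · exact ⟨s (4*m) - 1, Or.inl (by omega)⟩
    · exact ⟨s (4*m) - 2, Or.inr (by omega)⟩
  · intro d hd
    obtain ⟨m', rfl⟩ : ∃ m', m = m' + 1 := ⟨m - 1, by omega⟩
    obtain ⟨_, c, hc⟩ := ih m' (by omega) (by omega)
    obtain rfl : d = 4 * m' + 3 := by omega
    have h3 : c + 1 ≤ s (4 * m' + 3) ∧ s (4 * m' + 3) ≤ c + 2 := by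
      rcases hc with h | h <;> omega
    exact ⟨inblk m' (by omega) c hc _ (by omega) (by omega), inblk m' (by omega) c hc _ (by omega) (by omega)⟩
  · intro p hp h
    obtain ⟨_, c, hc⟩ := ih (p / 4) (by omega) (by omega)
    by_cases hp3 : p % 4 = 3
    · obtain ⟨_, c', hc'⟩ := ih (p / 4 + 1) (by omega) (by omega)
      have hh : ∀ v, c ≤ v → v ≤ c + 3 → ¬ (c' ≤ v ∧ v ≤ c' + 3) := by
        intro v hv hv' ⟨hw, hw'⟩
        obtain ⟨r, hr, hr'⟩ := hc.surj v hv hv'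
        obtain ⟨r', hr2, hr2'⟩ := hc'.surj v hw hw'
        have := inj _ _ (by omega) (by omega) (hr'.trans hr2'.symm)
        omega
      have e1 : p = 4 * (p/4) + 3 := by omega
      have e2 : p + 1 = 4 * (p/4+1) := by omega
      have h3 : c + 1 ≤ s p ∧ s p ≤ c + 2 := by
        rw [e1]
        rcases hc with h | h <;> omega
      have h4 : c' + 1 ≤ s (p+1) ∧ s (p+1) ≤ c' + 2 := by
        rw [e2]
        rcases hc' with h | h <;> omega
      have := hh (s (4 * m))
      omega
    · have r1 := hc.range (p % 4) (by omega)
      have r2 := hc.range (p % 4 + 1) (by omega)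
      rw [show 4 * (p/4) + p % 4 = p by omega] at r1
      rw [show 4 * (p/4) + (p % 4 + 1) = p + 1 by omega] at r2
      obtain ⟨q, hq, hq'⟩ := inblk (p/4) (by omega) c hc (s (4*m)) (by omega) (by omega)
      have := inj q (4*m) (by omega) hm hq'
      omega

theorem aligned (k : ℕ) (s : ℕ → ℤ)
    (inj : ∀ i j, i < 4 * k → j < 4 * k → s i = s j → i = j)
    (lo : ∀ i, i < 4 * k → 0 ≤ s i) (hi : ∀ i, i < 4 * k → s i < 4 * k)
    (surj : ∀ v : ℕ, v < 4 * k → ∃ i, i < 4 * k ∧ s i = v)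
    (blk : ∀ m, m < k → ∃ c, Blk s (4 * m) c) :
    ∀ m, m < k → ∃ j : ℕ, j < k ∧ Blk s (4 * m) (4 * (j : ℤ)) := by
  have disj : ∀ m m' c c' v, m < k → m' < k → Blk s (4*m) c → Blk s (4*m') c' →
      c ≤ v → v ≤ c + 3 → c' ≤ v → v ≤ c' + 3 → m = m' := by
    intro m m' c c' v hm hm' hc hc' h1 h2 h3 h4
    obtain ⟨r, hr, hr'⟩ := hc.surj v h1 h2
    obtain ⟨r', hr2, hr2'⟩ := hc'.surj v h3 h4
    have := inj _ _ (by omega) (by omega) (hr'.trans hr2'.symm)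
    omega
  have uniq : ∀ m c c', Blk s (4*m) c → Blk s (4*m) c' → c = c' := by
    intro m c c' h h'
    rcases h with h | h <;> rcases h' with h' | h' <;> omega
  have main : ∀ j : ℕ, j < k → ∃ m, m < k ∧ Blk s (4*m) (4 * (j : ℤ)) := by
    intro j
    induction j with
    | zero =>
      intro hj
      obtain ⟨i, hi', hs⟩ := surj 0 (by omega)
      obtain ⟨c, hc⟩ := blk (i / 4) (by omega)
      have r1 := hc.range (i % 4) (by omega)
      rw [show 4 * (i/4) + i % 4 = i by omega] at r1
      obtain ⟨r, hr, hr'⟩ := hc.surj c (by omega) (by omega)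
      have := lo (4 * (i/4) + r) (by omega)
      have e : c = 4 * ((0:ℕ):ℤ) := by push_cast at *; omega
      exact ⟨i/4, by omega, e ▸ hc⟩
    | succ j ih =>
      intro hj
      obtain ⟨m', hm', hb'⟩ := ih (by omega)
      obtain ⟨i, hi', hs⟩ := surj (4 * (j + 1)) (by omega)
      obtain ⟨c, hc⟩ := blk (i / 4) (by omega)
      have r1 := hc.range (i % 4) (by omega)
      rw [show 4 * (i/4) + i % 4 = i by omega] at r1
      push_cast at hs
      by_cases e : c = 4 * ((j+1:ℕ):ℤ)
      · exact ⟨i/4, by omega, e ▸ hc⟩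
      · push_cast at e
        have := disj (i/4) m' c _ (4 * (j:ℤ) + 3) (by omega) hm' hc hb' (by omega) (by omega) (by omega) (by omega)
        subst this
        have := uniq _ _ _ hc hb'
        omega
  intro m hm
  obtain ⟨c, hc⟩ := blk m hm
  obtain ⟨r, hr, hr'⟩ := hc.surj c (by omega) (by omega)
  have l := lo (4 * m + r) (by omega)
  have u := hi (4 * m + r) (by omega)
  obtain ⟨m', hm', hb'⟩ := main (c.toNat / 4) (by omega)
  have := disj m m' c _ c hm hm' hc hb' (by omega) (by omega) (by omega) (by omega)
  subst this
  exact ⟨c.toNat / 4, by omega, hb'⟩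

theorem nabla_succAbove {n : ℕ} (σ : Equiv.Perm (Fin (n + 1))) (i : Fin (n + 1)) (j : Fin n) :
    (σ i).succAbove (nabla σ i j) = σ (i.succAbove j) := by
  have h : ((finSuccEquiv' i).symm.trans (σ.trans (finSuccEquiv' (σ i)))) (some j)
      = finSuccEquiv' (σ i) (σ (i.succAbove j)) := by simp
  have hne : σ (i.succAbove j) ≠ σ i := fun h => Fin.succAbove_ne i j (σ.injective h)
  obtain ⟨x, hx⟩ := Fin.exists_succAbove_eq hne
  have h2 : some (nabla σ i j) = some x := by
    unfold nabla
    rw [Equiv.removeNone_some]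
    · rw [h, ← hx]; simp
    · exact ⟨x, by rw [h, ← hx]; simp⟩
  rw [Option.some.inj h2, hx]

theorem nabla_contains {n : ℕ} (σ : Equiv.Perm (Fin (n + 1))) (i : Fin (n + 1)) :
    Contains (nabla σ i) σ := by
  refine ⟨Fin.succAboveOrderEmb i, fun a b => ?_⟩
  simp only [Fin.succAboveOrderEmb_apply, ← nabla_succAbove]
  exact (Fin.strictMono_succAbove _).lt_iff_lt.symm

theorem perm_eq_of_lt_iff {n : ℕ} (σ τ : Equiv.Perm (Fin n)) (h : ∀ a b, σ a < σ b ↔ τ a < τ b) :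
    σ = τ := by
  let e : Fin n ≃o Fin n := StrictMono.orderIsoOfSurjective (fun x => τ (σ.symm x))
    (fun a b hab => (h _ _).1 (by simpa using hab)) (σ.symm.trans τ).surjective
  have : e = OrderIso.refl _ := Subsingleton.elim _ _
  ext x
  have h2 : e (σ x) = σ x := by rw [this]; rfl
  have h3 : e (σ x) = τ x := by
    change τ (σ.symm (σ x)) = τ x
    simp
  rw [← h2, h3]

theorem contains_eq_nabla {n : ℕ} (σ : Equiv.Perm (Fin (n + 1))) (τ : Equiv.Perm (Fin n))
    (h : Contains τ σ) : ∃ i, τ = nabla σ i := by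
  obtain ⟨f, hf⟩ := h
  have : ∃ i, ∀ x, f x ≠ i := by
    by_contra hc
    push Not at hc
    have := Fintype.card_le_of_surjective f hc
    simp at this
  obtain ⟨i, hi⟩ := this
  have hr : Set.range f = Set.range (Fin.succAboveOrderEmb i) := by
    have h1 : Set.range f ⊆ Set.range (Fin.succAboveOrderEmb i) := by
      rintro _ ⟨x, rfl⟩
      obtain ⟨y, hy⟩ := Fin.exists_succAbove_eq (hi x)
      exact ⟨y, hy⟩
    apply Set.eq_of_subset_of_ncard_le h1
    rw [← Set.image_univ, ← Set.image_univ, Set.ncard_image_of_injective _ f.injective,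
      Set.ncard_image_of_injective _ (Fin.succAboveOrderEmb i).injective]
  have hfe : ∀ x, f x = i.succAbove x := by
    have : (f : Fin n → Fin (n+1)) = i.succAbove :=
      (StrictMono.range_inj f.strictMono (Fin.strictMono_succAbove i)).1 hr
    intro x; rw [this]
  refine ⟨i, perm_eq_of_lt_iff _ _ fun a b => ?_⟩
  rw [hf, hfe, hfe, ← nabla_succAbove, ← nabla_succAbove]
  exact (Fin.strictMono_succAbove _).lt_iff_lt

/-- Values of a permutation as a function on natural numbers. -/
def sv {N : ℕ} (π : Equiv.Perm (Fin N)) (i : ℕ) : ℤ := if h : i < N then ((π ⟨i, h⟩ : ℕ) : ℤ) else 0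

theorem sv_eq {N : ℕ} (π : Equiv.Perm (Fin N)) (i : ℕ) (h : i < N) : sv π i = ((π ⟨i, h⟩ : ℕ) : ℤ) := by
  simp [sv, h]

theorem succAbove_val {n : ℕ} (i : Fin (n+1)) (j : Fin n) :
    ((i.succAbove j : Fin (n+1)) : ℕ) = if (j : ℕ) < i then (j : ℕ) else j + 1 := by
  unfold Fin.succAbove
  simp only [Fin.lt_def, Fin.val_castSucc]
  split_ifs <;> simp

theorem nabla_sv {n : ℕ} (σ : Equiv.Perm (Fin (n + 1))) (i : Fin (n + 1)) (j : ℕ) (hj : j < n) :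
    sv σ (if j < (i:ℕ) then j else j + 1) =
      if sv (nabla σ i) j < sv σ i then sv (nabla σ i) j else sv (nabla σ i) j + 1 := by
  have h := congrArg Fin.val (nabla_succAbove σ i ⟨j, hj⟩)
  rw [succAbove_val] at h
  have h2 : (if j < (i:ℕ) then j else j + 1) = (i.succAbove ⟨j, hj⟩ : ℕ) := by
    rw [succAbove_val]
  rw [h2, sv_eq _ _ (Fin.isLt _), sv_eq _ j hj, sv_eq _ i i.isLt]
  simp only [Fin.eta]
  rw [← h]
  push_cast
  simp only [Nat.cast_lt]

theorem king_sv {N : ℕ} (π : Equiv.Perm (Fin N)) :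
    IsKing π ↔ ∀ i, i + 1 < N → sv π (i+1) ≠ sv π i + 1 ∧ sv π (i+1) ≠ sv π i - 1 := by
  constructor
  · intro h i hi
    have := h ⟨i, by omega⟩ ⟨i+1, hi⟩ rfl
    unfold fdist at this
    rw [sv_eq _ _ hi, sv_eq _ i (by omega)]
    omega
  · intro h i j hij
    have := h i (by omega)
    rw [← hij, sv_eq _ _ i.isLt, sv_eq _ _ j.isLt] at this
    unfold fdist
    simp only [Fin.eta] at this
    omega

theorem block3_not_king {N : ℕ} (π : Equiv.Perm (Fin N)) (p : ℕ) (h : HasThreeBlockAt π p) :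
    ¬ IsKing π := by
  rw [king_sv]
  intro hk
  obtain ⟨hp, m, hm⟩ := h
  have k1 := hk p (by omega)
  have k2 := hk (p+1) (by omega)
  rw [sv_eq _ (p+1) (by omega), sv_eq _ p (by omega)] at k1
  rw [sv_eq _ (p+1) (by omega), sv_eq _ (p+1+1) (by omega)] at k2
  have e : (⟨p+1+1, by omega⟩ : Fin N) = ⟨p+2, hp⟩ := rfl
  rw [e] at k2
  have a0 : m ∈ ({m, m+1, m+2} : Finset ℕ) := by simp
  have a1 : m + 1 ∈ ({m, m+1, m+2} : Finset ℕ) := by simp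
  have a2 : m + 2 ∈ ({m, m+1, m+2} : Finset ℕ) := by simp
  rw [← hm] at a0 a1 a2
  simp only [Finset.mem_insert, Finset.mem_singleton] at a0 a1 a2
  omega

theorem sep_of_not_king {n : ℕ} (π : Equiv.Perm (Fin (n+1))) (hπ : IsKing π) (i : ℕ) (hi : i < n + 1)
    (h : ¬ IsKing (nabla π ⟨i, hi⟩)) :
    (∃ j, i = j + 1 ∧ j + 2 < n + 1 ∧ (sv π (j+2) = sv π j + 1 ∨ sv π (j+2) = sv π j - 1)) ∨
      (∃ p, p + 1 < n + 1 ∧ ((sv π p = sv π i - 1 ∧ sv π (p+1) = sv π i + 1) ∨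
        (sv π p = sv π i + 1 ∧ sv π (p+1) = sv π i - 1))) := by
  rw [king_sv] at hπ h
  push Not at h
  obtain ⟨j, hj, h⟩ := h
  have h : sv (nabla π ⟨i, hi⟩) (j + 1) = sv (nabla π ⟨i, hi⟩) j + 1 ∨
    sv (nabla π ⟨i, hi⟩) (j + 1) = sv (nabla π ⟨i, hi⟩) j - 1 := by tauto
  have n1 := nabla_sv π ⟨i, hi⟩ j (by omega)
  have n2 := nabla_sv π ⟨i, hi⟩ (j+1) hj
  dsimp only at n1 n2
  generalize sv (nabla π ⟨i, hi⟩) (j + 1) = x at *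
  generalize sv (nabla π ⟨i, hi⟩) j = y at *
  rcases lt_trichotomy (j+1) i with hc | hc | hc
  · rw [if_pos (by omega)] at n1 n2
    right
    refine ⟨j, by omega, ?_⟩
    have := hπ j (by omega)
    split_ifs at n1 n2 <;> omega
  · rw [if_pos (by omega)] at n1
    rw [if_neg (by omega)] at n2
    left
    refine ⟨j, hc.symm, by omega, ?_⟩
    have := hπ j (by omega)
    subst hc
    have e : j + 2 = j + 1 + 1 := rfl
    rw [e]
    split_ifs at n1 n2 <;> omega
  · rw [if_neg (by omega)] at n1 n2
    right
    refine ⟨j + 1, by omega, ?_⟩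
    have := hπ (j+1) (by omega)
    split_ifs at n1 n2 <;> omega

theorem block_gives3 {n : ℕ} (π : Equiv.Perm (Fin (n + 1))) (i : Fin (n+1)) (m : ℕ) (c : ℕ)
    (hm : 4 * m + 3 < n + 1) (him : (i : ℕ) / 4 = m) (hb : Blk (sv π) (4 * m) c) :
    HasThreeBlockAt (nabla π i) (4 * m) := by
  have hp : 4 * m + 2 < n := by omega
  refine ⟨hp, c, ?_⟩
  have n0 := nabla_sv π i (4*m) (by omega)
  have n1 := nabla_sv π i (4*m+1) (by omega)
  have n2 := nabla_sv π i (4*m+2) (by omega)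
  rw [sv_eq (nabla π i) _ (by omega)] at n0 n1 n2
  generalize (nabla π i ⟨4 * m, by omega⟩ : ℕ) = x at *
  generalize (nabla π i ⟨4 * m + 1, by omega⟩ : ℕ) = y at *
  generalize (nabla π i ⟨4 * m + 2, by omega⟩ : ℕ) = z at *
  suffices h : (x = c ∨ x = c + 1 ∨ x = c + 2) ∧ (y = c ∨ y = c + 1 ∨ y = c + 2) ∧
      (z = c ∨ z = c + 1 ∨ z = c + 2) ∧ x ≠ y ∧ y ≠ z ∧ x ≠ z by
    ext w
    simp only [Finset.mem_insert, Finset.mem_singleton]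
    omega
  have hi : (i : ℕ) = 4 * m ∨ (i : ℕ) = 4 * m + 1 ∨ (i : ℕ) = 4 * m + 2 ∨ (i : ℕ) = 4 * m + 3 := by omega
  have e1 : 4 * m + 1 + 1 = 4 * m + 2 := rfl
  have e2 : 4 * m + 2 + 1 = 4 * m + 3 := rfl
  rcases hb with ⟨a0, a1, a2, a3⟩ | ⟨a0, a1, a2, a3⟩ <;> rcases hi with h | h | h | h <;>
    rw [h] at n0 n1 n2 <;>
    simp only [lt_irrefl, if_false, e1, e2, a0, a1, a2, a3, lt_add_iff_pos_right, Nat.lt_add_one,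
      if_true, zero_lt_two, zero_lt_three, add_lt_iff_neg_left, not_lt_zero, add_lt_add_iff_left,
      Nat.ofNat_pos, Nat.one_lt_ofNat, Nat.not_ofNat_lt_one, Nat.reduceLT] at n0 n1 n2 <;>
    split_ifs at n0 n1 n2 <;> omega

theorem blocks_of_seps (n : ℕ) (π : Equiv.Perm (Fin (n + 4))) (hπ : IsKing π)
    (h : ∀ i, ¬ IsKing (nabla π i)) :
    ∃ (k : ℕ) (_ : n + 4 = 4 * k) (π' : Equiv.Perm (Fin k)),
      ∀ m : Fin k, Blk (sv π) (4 * (m : ℕ)) (4 * ((π' m : ℕ) : ℤ)) := by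
  have inj : ∀ i j, i < n + 4 → j < n + 4 → sv π i = sv π j → i = j := by
    intro i j hi hj h
    rw [sv_eq _ _ hi, sv_eq _ _ hj] at h
    have := π.injective (Fin.ext (Int.ofNat.inj h))
    simpa using this
  have ab := all_blocks (n + 4) (sv π) inj ((king_sv π).1 hπ)
    (fun i hi => sep_of_not_king π hπ i hi (h _))
  obtain ⟨k, hk⟩ : ∃ k, n + 4 = 4 * k := by
    refine ⟨(n + 4) / 4, ?_⟩
    by_contra hc
    have := ab ((n+4)/4) (by omega)
    omega
  have al := aligned k (sv π) (hk ▸ inj)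
    (fun i hi => by rw [sv_eq _ _ (by omega)]; omega)
    (fun i hi => by rw [sv_eq _ _ (by omega)]; have := (π ⟨i, by omega⟩).isLt; omega)
    (fun v hv => by
      refine ⟨π.symm ⟨v, by omega⟩, by omega, ?_⟩
      rw [sv_eq _ _ (Fin.isLt _)]; simp)
    (fun m hm => (ab m (by omega)).2)
  choose g hg hg' using fun m : Fin k => al m m.isLt
  let G : Fin k → Fin k := fun m => ⟨g m, hg m⟩
  have Gi : Function.Injective G := by
    intro a b hab
    have hab : g a = g b := congrArg Fin.val hab
    have h1 := hg' a
    have h2 := hg' b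
    rw [hab] at h1
    obtain ⟨r, hr, e⟩ := h1.surj _ le_rfl (by omega)
    obtain ⟨r', hr', e'⟩ := h2.surj _ le_rfl (by omega)
    have := inj _ _ (by omega) (by omega) (e.trans e'.symm)
    ext; omega
  exact ⟨k, hk, Equiv.ofBijective G (Finite.injective_iff_bijective.1 Gi), fun m => hg' m⟩

/-- for a king permutation `π` of length `n + 4 ≥ 4`, the following are
equivalent: (1) `π` is an inflation of some `π'` by blocks each equal to [2413] or [3142];
(2) deleting any value from `π` creates a 3-block; (3) `π` has no prince. -/
theorem no_prince_characterization (n : ℕ) (π : Equiv.Perm (Fin (n + 4))) (hπ : IsKing π) :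
    ((∃ (k : ℕ) (hk : n + 4 = 4 * k) (π' : Equiv.Perm (Fin k)),
        ∀ m : Fin k, ∃ τ : Equiv.Perm (Fin 4), (τ = p2413 ∨ τ = p3142) ∧
          ∀ r : Fin 4,
            (π ⟨4 * (m : ℕ) + (r : ℕ), by have := m.isLt; have := r.isLt; omega⟩ : ℕ)
              = 4 * (π' m : ℕ) + (τ r : ℕ)) ↔
      (∀ a : Fin (n + 4), ∃ p : ℕ, HasThreeBlockAt (nablaStar π a) p)) ∧
    ((∀ a : Fin (n + 4), ∃ p : ℕ, HasThreeBlockAt (nablaStar π a) p) ↔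
      ¬ ∃ τ : Equiv.Perm (Fin (n + 3)), IsKing τ ∧ StrictContains τ π) := by
  have h32 : (¬ ∃ τ : Equiv.Perm (Fin (n + 3)), IsKing τ ∧ StrictContains τ π) →
      ∀ i, ¬ IsKing (nabla π i) :=
    fun h i hk => h ⟨nabla π i, hk, nabla_contains π i, by omega⟩
  have h23 : (∀ a : Fin (n + 4), ∃ p : ℕ, HasThreeBlockAt (nablaStar π a) p) →
      ∀ i, ¬ IsKing (nabla π i) := by
    intro h i
    obtain ⟨p, hp⟩ := h (π i)
    have := block3_not_king _ p hp
    simpa [nablaStar] using this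
  have h12 : (∃ (k : ℕ) (_ : n + 4 = 4 * k) (π' : Equiv.Perm (Fin k)),
      ∀ m : Fin k, Blk (sv π) (4 * (m : ℕ)) (4 * ((π' m : ℕ) : ℤ))) →
      (∀ a : Fin (n + 4), ∃ p : ℕ, HasThreeBlockAt (nablaStar π a) p) := by
    rintro ⟨k, hk, π', h⟩ a
    have hlt : ((π⁻¹ a : Fin (n+4)) : ℕ) / 4 < k := by have := (π⁻¹ a).isLt; omega
    exact ⟨_, block_gives3 (n := n + 3) π (π⁻¹ a) _ (4 * (π' ⟨_, hlt⟩ : ℕ)) (by omega) rfl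
      (by have := h ⟨_, hlt⟩; push_cast; exact this)⟩
  refine ⟨⟨?_, ?_⟩, ?_, ?_⟩
  · rintro ⟨k, hk, π', h⟩
    apply h12
    refine ⟨k, hk, π', fun m => ?_⟩
    obtain ⟨τ, hτ, hr⟩ := h m
    have hm := m.isLt
    have r0 := hr 0
    have r1 := hr 1
    have r2 := hr 2
    have r3 := hr 3
    unfold Blk
    rw [sv_eq _ (4 * (m:ℕ)) (by omega), sv_eq _ (4 * (m:ℕ) + 1) (by omega),
      sv_eq _ (4 * (m:ℕ) + 2) (by omega), sv_eq _ (4 * (m:ℕ) + 3) (by omega)]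
    rcases hτ with rfl | rfl
    · left
      refine ⟨?_, ?_, ?_, ?_⟩
      · exact_mod_cast r0
      · exact_mod_cast r1
      · exact_mod_cast r2
      · exact_mod_cast r3
    · right
      refine ⟨?_, ?_, ?_, ?_⟩
      · exact_mod_cast r0
      · exact_mod_cast r1
      · exact_mod_cast r2
      · exact_mod_cast r3
  · intro h
    obtain ⟨k, hk, π', hb⟩ := blocks_of_seps n π hπ (h23 h)
    refine ⟨k, hk, π', fun m => ?_⟩
    have hm := m.isLt
    have hb := hb m
    unfold Blk at hb
    rw [sv_eq _ (4 * (m:ℕ)) (by omega), sv_eq _ (4 * (m:ℕ) + 1) (by omega),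
      sv_eq _ (4 * (m:ℕ) + 2) (by omega), sv_eq _ (4 * (m:ℕ) + 3) (by omega)] at hb
    rcases hb with ⟨a0, a1, a2, a3⟩ | ⟨a0, a1, a2, a3⟩
    · refine ⟨p2413, Or.inl rfl, fun r => ?_⟩
      fin_cases r
      · exact_mod_cast a0
      · exact_mod_cast a1
      · exact_mod_cast a2
      · exact_mod_cast a3
    · refine ⟨p3142, Or.inr rfl, fun r => ?_⟩
      fin_cases r
      · exact_mod_cast a0
      · exact_mod_cast a1
      · exact_mod_cast a2
      · exact_mod_cast a3
  · rintro h ⟨τ, hτ, hc, _⟩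
    obtain ⟨i, rfl⟩ := contains_eq_nabla (n := n + 3) π τ hc
    exact h23 h i hτ
  · intro h
    exact h12 (blocks_of_seps n π hπ (h32 h))
end

section
/- For every n > 4 and every σ ∈ K_n, there exists π ∈ K_5 such that π ⪯ σ. -/
open Equiv

def KBtw (x u v : ℤ) : Prop := (u < x ∧ x < v) ∨ (v < x ∧ x < u)

def KTwin {α : Type} (p q : α → ℤ) (S : Finset α) (u v : α) : Prop :=
  u ∈ S ∧ v ∈ S ∧ p u < p v ∧ ∀ y ∈ S, ¬ KBtw (p y) (p u) (p v) ∧ ¬ KBtw (q y) (q u) (q v)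

def KP {α : Type} (p q : α → ℤ) (a b c d : α) : Prop :=
  p a < p b ∧ p b < p c ∧ p c < p d ∧ q c < q a ∧ q a < q d ∧ q d < q b

lemma kbtw_move {a b c d : ℤ} (h : KBtw a c d) (h1 : ¬ KBtw c a b) (h2 : ¬ KBtw d a b)
    (h3 : c ≠ b) (h4 : d ≠ b) : KBtw b c d := by
  unfold KBtw at *; omega

lemma kbtw_symm {a b c : ℤ} (h : ¬ KBtw a b c) : ¬ KBtw a c b := by
  unfold KBtw at *; omega

set_option maxHeartbeats 2000000 in
/-- core step, with orientation `q a < q x < q b`. -/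
lemma ktwin_step {α : Type} [DecidableEq α] (p q : α → ℤ) (hp : Function.Injective p)
    (hq : Function.Injective q) (S : Finset α)
    (h1 : ∀ a ∈ S, ∀ b ∈ S, ∀ c ∈ S, ∀ d ∈ S, ¬ KP p q a b c d)
    (hno : ∀ u v, ¬ KTwin p q S u v) (x a b : α) (hxS : x ∈ S)
    (hx : ∀ y ∈ S, p y ≤ p x)
    (hab : KTwin p q (S.erase x) a b) (hax : q a < q x) (hxb : q x < q b)
    (c d : α) (hcd : KTwin p q (S.erase a) c d)
    (e g : α) (heg : KTwin p q (S.erase b) e g) : False := by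
  obtain ⟨ha, hb, hpab, hT⟩ := hab
  obtain ⟨hc, hd, hpcd, hT2⟩ := hcd
  obtain ⟨he, hg, hpeg, hT3⟩ := heg
  simp only [Finset.mem_erase] at *
  have hbx : p b < p x := lt_of_le_of_ne (hx b hb.2) (fun h => hb.1 (hp h))
  have n1 := hno c d
  have n2 := hno e g
  have n3 := hno b x
  simp only [KTwin, not_and, not_forall] at n1 n2 n3
  obtain ⟨y, hyS, hy⟩ := n1 hc.2 hd.2 hpcd
  obtain ⟨z, hzS, hz⟩ := n2 he.2 hg.2 hpeg
  obtain ⟨w, hwS, hw⟩ := n3 hb.2 hxS hbx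
  clear n1 n2 n3
  have hya : y = a := by
    by_contra h; exact hy (hT2 y ⟨h, hyS⟩).1 (hT2 y ⟨h, hyS⟩).2
  have hzb : z = b := by
    by_contra h; exact hz (hT3 z ⟨h, hzS⟩).1 (hT3 z ⟨h, hzS⟩).2
  rw [hya] at hy
  rw [hzb] at hz
  clear hya hzb hyS hzS y z
  have hy' : KBtw (p a) (p c) (p d) ∨ KBtw (q a) (q c) (q d) := by
    by_contra h; exact hy (fun t => h (.inl t)) (fun t => h (.inr t))
  have hz' : KBtw (p b) (p e) (p g) ∨ KBtw (q b) (q e) (q g) := by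
    by_contra h; exact hz (fun t => h (.inl t)) (fun t => h (.inr t))
  have hw' : KBtw (p w) (p b) (p x) ∨ KBtw (q w) (q b) (q x) := by
    by_contra h; exact hw (fun t => h (.inl t)) (fun t => h (.inr t))
  clear hy hz hw
  have ip : ∀ u v, u ≠ v → p u ≠ p v := fun u v h h' => h (hp h')
  have iq : ∀ u v, u ≠ v → q u ≠ q v := fun u v h h' => h (hq h')
  have hab : a ≠ b := by rintro rfl; omega
  obtain ⟨_, X2⟩ := hT2 x ⟨fun h => ha.1 h.symm, hxS⟩
  obtain ⟨B2, B2'⟩ := hT2 b ⟨hab.symm, hb.2⟩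
  obtain ⟨_, X3⟩ := hT3 x ⟨fun h => hb.1 h.symm, hxS⟩
  obtain ⟨A3, A3'⟩ := hT3 a ⟨hab, ha.2⟩
  have cx : c ≠ x := by rintro rfl; have := hx d hd.2; omega
  have ex : e ≠ x := by rintro rfl; have := hx g hg.2; omega
  obtain ⟨C, C'⟩ := hT c ⟨cx, hc.2⟩
  obtain ⟨E, E'⟩ := hT e ⟨ex, he.2⟩
  have key : d = b ∧ p c < p a ∧ q b < q c := by
    by_cases cb : c = b
    · subst cb
      exfalso
      by_cases dx : d = x
      · subst dx
        rcases hy' with h | h <;> simp only [KBtw] at h <;> omega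
      · rcases hy' with h | h <;> simp only [KBtw] at h X2 <;> omega
    · have pcb := ip c b cb
      have qcb := iq c b cb
      have pca := ip c a hc.1
      have qca := iq c a hc.1
      by_cases dx : d = x
      · subst dx
        exfalso
        have k := h1 a ha.2 b hb.2 c hc.2 d hxS
        rcases hy' with h | h
        · simp only [KBtw] at h B2; omega
        · simp only [KBtw, KP] at h B2 C k; omega
      · obtain ⟨D, D'⟩ := hT d ⟨dx, hd.2⟩
        by_cases db : d = b
        · subst db
          refine ⟨rfl, ?_⟩
          rcases hy' with h | h
          · simp only [KBtw] at h C' X2; omega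
          · simp only [KBtw] at h X2; omega
        · exfalso
          rcases hy' with h | h
          · exact B2 (kbtw_move h C D pcb (ip d b db))
          · exact B2' (kbtw_move h C' D' qcb (iq d b db))
  obtain ⟨rfl, kc1, kc2⟩ := key
  by_cases gx : g = x
  · subst gx
    by_cases ea : e = a
    · subst ea
      have wg : w ≠ g := by
        rintro rfl; rcases hw' with h | h <;> simp only [KBtw] at h <;> omega
      have wd : w ≠ d := by
        rintro rfl; rcases hw' with h | h <;> simp only [KBtw] at h <;> omega
      have t1 := (hT3 w ⟨wd, hwS⟩).1
      have t2 := (hT w ⟨wg, hwS⟩).2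
      rcases hw' with h | h
      · simp only [KBtw] at h t1; omega
      · simp only [KBtw] at h t2; omega
    · have pea := ip e a ea
      have ped := ip e d he.1
      rcases hz' with h | h
      · simp only [KBtw] at h E A3; omega
      · have ec : e ≠ c := by rintro rfl; simp only [KBtw] at A3; omega
        have qec := iq e c ec
        have t1 := (hT2 e ⟨ea, he.2⟩).2
        have cd : c ≠ d := by rintro rfl; omega
        have t2 := (hT3 c ⟨cd, hc.2⟩).2
        simp only [KBtw] at h t1 t2; omega
  · obtain ⟨G, G'⟩ := hT g ⟨gx, hg.2⟩
    have xg := hx g hg.2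
    have xg' := ip g x gx
    have pgd := ip g d hg.1
    have qgd := iq g d hg.1
    have ped := ip e d he.1
    have qed := iq e d he.1
    by_cases ea : e = a
    · subst ea
      have k := h1 e ha.2 d hb.2 g hg.2 x hxS
      have ge : g ≠ e := by rintro rfl; omega
      have qge := iq g e ge
      rcases hz' with h | h
      · simp only [KBtw, KP] at h G' X3 k; omega
      · simp only [KBtw] at h X3; omega
    · have pea := ip e a ea
      have qea := iq e a ea
      by_cases ga : g = a
      · subst ga
        rcases hz' with h | h
        · simp only [KBtw] at h; omega
        · simp only [KBtw] at h X3; omega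
      · rcases hz' with h | h
        · exact A3 (kbtw_move h (kbtw_symm E) (kbtw_symm G) pea (ip g a ga))
        · exact A3' (kbtw_move h (kbtw_symm E') (kbtw_symm G') qea (iq g a ga))

lemma kbtw_neg {a b c : ℤ} : KBtw (-a) (-b) (-c) ↔ KBtw a b c := by
  unfold KBtw; omega

lemma ktwin_neg {α : Type} (p q : α → ℤ) (S : Finset α) (u v : α) :
    KTwin p (fun i => - q i) S u v ↔ KTwin p q S u v := by
  simp only [KTwin, kbtw_neg]

lemma ktwin_exists {α : Type} [DecidableEq α] (p q : α → ℤ) (hp : Function.Injective p)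
    (hq : Function.Injective q) : ∀ k : ℕ, ∀ S : Finset α, S.card = k + 2 →
    (∀ a ∈ S, ∀ b ∈ S, ∀ c ∈ S, ∀ d ∈ S, ¬ KP p q a b c d) →
    (∀ a ∈ S, ∀ b ∈ S, ∀ c ∈ S, ∀ d ∈ S, ¬ KP p (fun i => - q i) a b c d) →
    ∃ u v, KTwin p q S u v := by
  intro k
  induction k with
  | zero =>
    intro S hS _ _
    obtain ⟨u, v, huv, rfl⟩ := Finset.card_eq_two.mp hS
    have h := fun h => huv (hp h)
    rcases lt_or_gt_of_ne h with h | h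
    · refine ⟨u, v, by simp, by simp, h, ?_⟩
      intro y hy
      simp only [Finset.mem_insert, Finset.mem_singleton] at hy
      rcases hy with rfl | rfl <;> simp [KBtw]
    · refine ⟨v, u, by simp, by simp, h, ?_⟩
      intro y hy
      simp only [Finset.mem_insert, Finset.mem_singleton] at hy
      rcases hy with rfl | rfl <;> simp [KBtw]
  | succ k ih =>
    intro S hS h1 h2
    by_contra hno
    push Not at hno
    have IH : ∀ s ∈ S, ∃ u v, KTwin p q (S.erase s) u v := by
      intro s hs
      apply ih
      · rw [Finset.card_erase_of_mem hs]; omega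
      · intro a ha b hb c hc d hd
        exact h1 a (Finset.mem_of_mem_erase ha) b (Finset.mem_of_mem_erase hb) c
          (Finset.mem_of_mem_erase hc) d (Finset.mem_of_mem_erase hd)
      · intro a ha b hb c hc d hd
        exact h2 a (Finset.mem_of_mem_erase ha) b (Finset.mem_of_mem_erase hb) c
          (Finset.mem_of_mem_erase hc) d (Finset.mem_of_mem_erase hd)
    have hne : S.Nonempty := by rw [← Finset.card_pos]; omega
    obtain ⟨x, hxS, hx⟩ := Finset.exists_max_image S p hne
    obtain ⟨a, b, hab⟩ := IH x hxS
    have haS := Finset.mem_of_mem_erase hab.1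
    have hbS := Finset.mem_of_mem_erase hab.2.1
    obtain ⟨c, d, hcd⟩ := IH a haS
    obtain ⟨e, g, heg⟩ := IH b hbS
    have hn := hno a b
    simp only [KTwin, not_and, not_forall] at hn
    obtain ⟨y, hyS, hy⟩ := hn haS hbS hab.2.2.1
    have hyx : y = x := by
      by_contra h
      have := hab.2.2.2 y (Finset.mem_erase.mpr ⟨h, hyS⟩)
      exact hy this.1 this.2
    subst hyx
    have hpb := hx b hbS
    have hyq : KBtw (q y) (q a) (q b) := by
      by_contra h
      exact hy (by unfold KBtw; have := hab.2.2.1; omega) h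
    rcases hyq with h | h
    · exact ktwin_step p q hp hq S h1 hno y a b hyS hx hab h.1 h.2 c d hcd e g heg
    · refine ktwin_step p (fun i => - q i) hp (fun i j h => hq (neg_injective h)) S h2 ?_ y a b hyS hx
        ((ktwin_neg ..).mpr hab) (neg_lt_neg h.2) (neg_lt_neg h.1) c d ((ktwin_neg ..).mpr hcd) e g
        ((ktwin_neg ..).mpr heg)
      intro u v
      rw [ktwin_neg]
      exact hno u v

def KFree {α : Type} (p q : α → ℤ) : Prop :=
  ∀ x : Fin 5 → α, (∀ i j, i < j → p (x i) < p (x j)) → ∀ y : Fin 4 → Fin 5,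
    (∀ i : Fin 4, KBtw (q (x (y i))) (q (x i.castSucc)) (q (x i.succ))) → False

lemma KFree.neg {α : Type} {p q : α → ℤ} (H : KFree p q) : KFree p (fun i => - q i) := by
  intro x hx y hy
  simp only [kbtw_neg] at hy
  exact H x hx y hy

lemma KFree.use {α : Type} {p q : α → ℤ} (H : KFree p q) (x0 x1 x2 x3 x4 : α)
    (y0 y1 y2 y3 : Fin 5)
    (h0 : p x0 < p x1) (h1 : p x1 < p x2) (h2 : p x2 < p x3) (h3 : p x3 < p x4)
    (k0 : KBtw (q (![x0, x1, x2, x3, x4] y0)) (q x0) (q x1))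
    (k1 : KBtw (q (![x0, x1, x2, x3, x4] y1)) (q x1) (q x2))
    (k2 : KBtw (q (![x0, x1, x2, x3, x4] y2)) (q x2) (q x3))
    (k3 : KBtw (q (![x0, x1, x2, x3, x4] y3)) (q x3) (q x4)) : False := by
  refine H ![x0, x1, x2, x3, x4] ?_ ![y0, y1, y2, y3] ?_
  · have : StrictMono (fun i => p (![x0, x1, x2, x3, x4] i)) := by
      rw [Fin.strictMono_iff_lt_succ]
      intro i
      fin_cases i
      · exact h0
      · exact h1
      · exact h2
      · exact h3
    intro i j hij
    exact this hij
  · intro i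
    fin_cases i
    · exact k0
    · exact k1
    · exact k2
    · exact k3

def KBox {α : Type} (p q : α → ℤ) (a b c d e : α) : Prop :=
  (p e < p b ∧ q c < q e ∧ q e < q d) ∨ (p a < p e ∧ p e < p c ∧ q d < q e) ∨
  (p b < p e ∧ p e < p d ∧ q e < q a) ∨ (p c < p e ∧ q a < q e ∧ q e < q b)

lemma kbox {α : Type} {p q : α → ℤ} (hp : Function.Injective p)
    (hq : Function.Injective q) (H : KFree p q) {a b c d : α} (h : KP p q a b c d) (e : α) :
    KBox p q a b c d e := by
  obtain ⟨h1, h2, h3, h4, h5, h6⟩ := h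
  have ip : ∀ u v, u ≠ v → p u ≠ p v := fun u v h h' => h (hp h')
  have iq : ∀ u v, u ≠ v → q u ≠ q v := fun u v h h' => h (hq h')
  by_cases ea : e = a
  · subst ea; unfold KBox; omega
  by_cases eb : e = b
  · subst eb; unfold KBox; omega
  by_cases ec : e = c
  · subst ec; unfold KBox; omega
  by_cases ed : e = d
  · subst ed; unfold KBox; omega
  have qa := iq _ _ ea
  have qb := iq _ _ eb
  have qc := iq _ _ ec
  have qd := iq _ _ ed
  by_contra hn
  unfold KBox at hn
  rcases lt_or_gt_of_ne (ip _ _ ea) with pa | pa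
  · rcases lt_or_gt_of_ne qc with k | k
    · apply H.use e a b c d 3 4 1 1 <;> (try simp [KBtw]) <;> omega
    · apply H.use e a b c d 4 4 1 1 <;> (try simp [KBtw]) <;> omega
  rcases lt_or_gt_of_ne (ip _ _ eb) with pb | pb
  · apply H.use a e b c d 3 0 0 0 <;> (try simp [KBtw]) <;> omega
  rcases lt_or_gt_of_ne (ip _ _ ec) with pc | pc
  · apply H.use a b e c d 4 4 0 0 <;> (try simp [KBtw]) <;> omega
  rcases lt_or_gt_of_ne (ip _ _ ed) with pd | pd
  · apply H.use a b c e d 4 0 0 1 <;> (try simp [KBtw]) <;> omega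
  rcases lt_or_gt_of_ne qa with k | k
  · apply H.use a b c d e 3 0 0 0 <;> (try simp [KBtw]) <;> omega
  · apply H.use a b c d e 3 0 0 1 <;> (try simp [KBtw]) <;> omega

lemma kinflate {α : Type} [Fintype α] [DecidableEq α] {p q : α → ℤ} (hp : Function.Injective p)
    (hq : Function.Injective q) (H : KFree p q)
    (hno : ∀ u v, ¬ KTwin p q Finset.univ u v) (P : α → Prop)
    (s t : α) (hs : P s) (ht : P t) (hst : s ≠ t)
    (hsep : ∀ u v y, P u → P v → ¬ P y →
      ¬ KBtw (p y) (p u) (p v) ∧ ¬ KBtw (q y) (q u) (q v))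
    (r : α) (hr : (∀ u, P u → p u < p r) ∨ (∀ u, P u → p r < p u))
    (hr' : (∀ u, P u → q u < q r) ∨ (∀ u, P u → q r < q u)) : False := by
  classical
  set S : Finset α := Finset.univ.filter P with hS
  have hm : ∀ u, u ∈ S ↔ P u := by simp [hS]
  have hcard : 1 < S.card :=
    Finset.one_lt_card.mpr ⟨s, (hm s).2 hs, t, (hm t).2 ht, hst⟩
  by_cases k1 : ∀ a ∈ S, ∀ b ∈ S, ∀ c ∈ S, ∀ d ∈ S, ¬ KP p q a b c d
  · by_cases k2 : ∀ a ∈ S, ∀ b ∈ S, ∀ c ∈ S, ∀ d ∈ S, ¬ KP p (fun i => - q i) a b c d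
    · obtain ⟨u, v, hu, hv, huv, hT⟩ :=
        ktwin_exists p q hp hq (S.card - 2) S (by omega) k1 k2
      refine hno u v ⟨Finset.mem_univ _, Finset.mem_univ _, huv, fun y _ => ?_⟩
      by_cases hy : P y
      · exact hT y ((hm y).2 hy)
      · exact hsep u v y ((hm u).1 hu) ((hm v).1 hv) hy
    · push Not at k2
      obtain ⟨a, ha, b, hb, c, hc, d, hd, hk⟩ := k2
      rw [hm] at ha hb hc hd
      have hbx := kbox hp (q := fun i => - q i) (fun i j h => hq (neg_injective h)) H.neg hk r
      simp only [KBox] at hbx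
      simp only [KP] at hk
      rcases hr with h | h <;> rcases hr' with h' | h' <;>
      · have := h a ha
        have := h b hb
        have := h c hc
        have := h d hd
        have := h' a ha
        have := h' b hb
        have := h' c hc
        have := h' d hd
        omega
  · push Not at k1
    obtain ⟨a, ha, b, hb, c, hc, d, hd, hk⟩ := k1
    rw [hm] at ha hb hc hd
    have hbx := kbox hp hq H hk r
    unfold KBox at hbx
    unfold KP at hk
    rcases hr with h | h <;> rcases hr' with h' | h' <;>
    · have := h a ha
      have := h b hb
      have := h c hc
      have := h d hd
      have := h' a ha
      have := h' b hb
      have := h' c hc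
      have := h' d hd
      omega

lemma kmain {α : Type} [Fintype α] [DecidableEq α] {p q : α → ℤ} (hp : Function.Injective p)
    (hq : Function.Injective q) (H : KFree p q) (hc5 : 4 < Fintype.card α)
    (hno : ∀ u v, ¬ KTwin p q Finset.univ u v) (a b c d : α) (h : KP p q a b c d) : False := by
  obtain ⟨e, he⟩ : ∃ e, e ∉ ({a, b, c, d} : Finset α) := by
    by_contra hcon
    push Not at hcon
    have h1 : (Finset.univ : Finset α) ⊆ {a, b, c, d} := fun x _ => hcon x
    have h2 := Finset.card_le_card h1
    have h3 : ({a, b, c, d} : Finset α).card ≤ 4 := Finset.card_le_four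
    rw [Finset.card_univ] at h2
    omega
  simp only [Finset.mem_insert, Finset.mem_singleton, not_or] at he
  obtain ⟨ea, eb, ec, ed⟩ := he
  have hB := kbox hp hq H h e
  have h0 := h
  obtain ⟨h1, h2, h3, h4, h5, h6⟩ := h0
  rcases hB with hB | hB | hB | hB
  · refine kinflate hp hq H hno (fun y => p y < p b ∧ q c < q y ∧ q y < q d) e a hB
      (by omega) ea ?_ b (.inl fun u hu => by omega) (.inl fun u hu => by omega)
    intro u v y hu hv hy
    have b1 := kbox hp hq H (a := u) (b := b) (c := c) (d := d) (by unfold KP; omega) y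
    have b2 := kbox hp hq H (a := v) (b := b) (c := c) (d := d) (by unfold KP; omega) y
    rcases b1 with b1 | b1 | b1 | b1 <;> rcases b2 with b2 | b2 | b2 | b2 <;>
      first
        | exact absurd b1 hy
        | exact absurd b2 hy
        | (unfold KBtw; omega)
        | (exfalso
           have b3 := kbox hp hq H (a := u) (b := b) (c := y) (d := d) (by unfold KP; omega) v
           unfold KBox at b3
           omega)
        | (exfalso
           have b3 := kbox hp hq H (a := v) (b := b) (c := y) (d := d) (by unfold KP; omega) u
           unfold KBox at b3
           omega)
  · refine kinflate hp hq H hno (fun y => p a < p y ∧ p y < p c ∧ q d < q y) e b hB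
      (by omega) eb ?_ c (.inl fun u hu => by omega) (.inr fun u hu => by omega)
    intro u v y hu hv hy
    have b1 := kbox hp hq H (a := a) (b := u) (c := c) (d := d) (by unfold KP; omega) y
    have b2 := kbox hp hq H (a := a) (b := v) (c := c) (d := d) (by unfold KP; omega) y
    rcases b1 with b1 | b1 | b1 | b1 <;> rcases b2 with b2 | b2 | b2 | b2 <;>
      first
        | exact absurd b1 hy
        | exact absurd b2 hy
        | (unfold KBtw; omega)
        | (exfalso
           have b3 := kbox hp hq H (a := y) (b := u) (c := c) (d := d) (by unfold KP; omega) v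
           unfold KBox at b3
           omega)
        | (exfalso
           have b3 := kbox hp hq H (a := y) (b := v) (c := c) (d := d) (by unfold KP; omega) u
           unfold KBox at b3
           omega)
  · refine kinflate hp hq H hno (fun y => p b < p y ∧ p y < p d ∧ q y < q a) e c hB
      (by omega) ec ?_ d (.inl fun u hu => by omega) (.inl fun u hu => by omega)
    intro u v y hu hv hy
    have b1 := kbox hp hq H (a := a) (b := b) (c := u) (d := d) (by unfold KP; omega) y
    have b2 := kbox hp hq H (a := a) (b := b) (c := v) (d := d) (by unfold KP; omega) y
    rcases b1 with b1 | b1 | b1 | b1 <;> rcases b2 with b2 | b2 | b2 | b2 <;>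
      first
        | exact absurd b1 hy
        | exact absurd b2 hy
        | (unfold KBtw; omega)
        | (exfalso
           have b3 := kbox hp hq H (a := a) (b := b) (c := v) (d := y) (by unfold KP; omega) u
           unfold KBox at b3
           omega)
        | (exfalso
           have b3 := kbox hp hq H (a := a) (b := b) (c := u) (d := y) (by unfold KP; omega) v
           unfold KBox at b3
           omega)
  · refine kinflate hp hq H hno (fun y => p c < p y ∧ q a < q y ∧ q y < q b) e d hB
      (by omega) ed ?_ a (.inr fun u hu => by omega) (.inr fun u hu => by omega)
    intro u v y hu hv hy
    have b1 := kbox hp hq H (a := a) (b := b) (c := c) (d := u) (by unfold KP; omega) y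
    have b2 := kbox hp hq H (a := a) (b := b) (c := c) (d := v) (by unfold KP; omega) y
    rcases b1 with b1 | b1 | b1 | b1 <;> rcases b2 with b2 | b2 | b2 | b2 <;>
      first
        | exact absurd b1 hy
        | exact absurd b2 hy
        | (unfold KBtw; omega)
        | (exfalso
           have b3 := kbox hp hq H (a := a) (b := y) (c := c) (d := v) (by unfold KP; omega) u
           unfold KBox at b3
           omega)
        | (exfalso
           have b3 := kbox hp hq H (a := a) (b := y) (c := c) (d := u) (by unfold KP; omega) v
           unfold KBox at b3
           omega)

lemma kfree_of {n : ℕ} (σ : Equiv.Perm (Fin n))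
    (h : ¬ ∃ π : Equiv.Perm (Fin 5), IsKing π ∧ Contains π σ) :
    KFree (fun i : Fin n => (i : ℤ)) (fun i => ((σ i : Fin n) : ℤ)) := by
  intro x hx y hy
  have hmono : StrictMono x := by
    intro i j hij
    have := hx i j hij
    simp only at this
    exact Fin.lt_def.mpr (by omega)
  have hinj : Function.Injective (σ ∘ x) := σ.injective.comp hmono.injective
  set s := Tuple.sort (σ ∘ x) with hs
  have hsm : StrictMono ((σ ∘ x) ∘ s) :=
    (Tuple.monotone_sort (σ ∘ x)).strictMono_of_injective (hinj.comp s.injective)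
  have key : ∀ a b, s⁻¹ a < s⁻¹ b ↔ σ (x a) < σ (x b) := by
    intro a b
    rw [← hsm.lt_iff_lt]
    simp
  apply h
  refine ⟨s⁻¹, ?_, OrderEmbedding.ofStrictMono x hmono, fun a b => key a b⟩
  intro i j hij hd
  have hi : (i : ℕ) < 4 := by omega
  have hk := hy ⟨i, hi⟩
  have e1 : (⟨i, hi⟩ : Fin 4).castSucc = i := by ext; rfl
  have e2 : (⟨i, hi⟩ : Fin 4).succ = j := by ext; simp [hij]
  rw [e1, e2] at hk
  set w := y ⟨i, hi⟩
  have k1 := key i w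
  have k2 := key w j
  have k3 := key j w
  have k4 := key w i
  simp only [Fin.lt_def] at k1 k2 k3 k4
  unfold fdist at hd
  simp only [KBtw] at hk
  rcases hk with hk | hk
  · have := k1.2 (by omega)
    have := k2.2 (by omega)
    omega
  · have := k3.2 (by omega)
    have := k4.2 (by omega)
    omega

lemma ktwin_king {n : ℕ} (σ : Equiv.Perm (Fin n)) (hσ : IsKing σ) (u v : Fin n) :
    ¬ KTwin (fun i : Fin n => (i : ℤ)) (fun i => ((σ i : Fin n) : ℤ)) Finset.univ u v := by
  rintro ⟨-, -, huv, hT⟩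
  simp only [Finset.mem_univ, true_implies, KBtw] at huv hT
  have hv : (v : ℕ) = u + 1 := by
    by_contra hne
    have hv := v.isLt
    have := (hT ⟨u + 1, by omega⟩).1
    simp only at this
    omega
  have hne : (σ u : ℕ) ≠ σ v := by
    intro h
    have := σ.injective (Fin.ext h)
    subst this
    omega
  have hd := hσ u v hv
  unfold fdist at hd
  have l1 := (σ u).isLt
  have l2 := (σ v).isLt
  rcases lt_or_gt_of_ne hne with h | h
  · have := (hT (σ.symm ⟨σ u + 1, by omega⟩)).2
    simp only [Equiv.apply_symm_apply] at this
    omega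
  · have := (hT (σ.symm ⟨σ v + 1, by omega⟩)).2
    simp only [Equiv.apply_symm_apply] at this
    omega

/-- every king of length `n > 4` contains a king of length `5`. -/
theorem contains_king_of_length_five (n : ℕ) (hn : 4 < n)
    (σ : Equiv.Perm (Fin n)) (hσ : IsKing σ) :
    ∃ π : Equiv.Perm (Fin 5), IsKing π ∧ Contains π σ := by
  by_contra hcon
  have H := kfree_of σ hcon
  have hno := ktwin_king σ hσ
  have hp : Function.Injective (fun i : Fin n => (i : ℤ)) := fun i j h => by
    simp only at h; exact Fin.ext (by omega)
  have hq : Function.Injective (fun i : Fin n => ((σ i : Fin n) : ℤ)) := fun i j h => by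
    simp only at h; exact σ.injective (Fin.ext (by omega))
  by_cases k1 : ∃ a b c d, KP (fun i : Fin n => (i : ℤ)) (fun i => ((σ i : Fin n) : ℤ)) a b c d
  · obtain ⟨a, b, c, d, hk⟩ := k1
    exact kmain hp hq H (by simpa using hn) hno a b c d hk
  by_cases k2 : ∃ a b c d,
      KP (fun i : Fin n => (i : ℤ)) (fun i => - ((σ i : Fin n) : ℤ)) a b c d
  · obtain ⟨a, b, c, d, hk⟩ := k2
    refine kmain hp (q := fun i => - ((σ i : Fin n) : ℤ)) (fun i j h => hq (neg_injective h))
      H.neg (by simpa using hn) ?_ a b c d hk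
    intro u v hh
    exact hno u v ((ktwin_neg (fun i : Fin n => (i : ℤ)) (fun i => ((σ i : Fin n) : ℤ))
      Finset.univ u v).1 hh)
  push Not at k1 k2
  obtain ⟨u, v, hT⟩ := ktwin_exists _ _ hp hq (n - 2) Finset.univ (by simp; omega)
    (fun a _ b _ c _ d _ => k1 a b c d) (fun a _ b _ c _ d _ => k2 a b c d)
  exact hno u v hT
end

section
/- Let π ∈ K_n with n > 4. If π does not contain [2413], or π does not contain [3142], then μ(π) = 0. -/
open Equiv

open scoped Classical in
/-- The Möbius function of the poset of king permutations:
`μ([1]) = 1` and, for longer kings, `μ(σ) = -∑ μ(τ)` over all king permutations `τ ≺ σ`. -/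
noncomputable def kingMu : (n : ℕ) → Equiv.Perm (Fin n) → ℤ
  | 0, _ => 1
  | 1, _ => 1
  | n + 2, σ =>
    - ∑ l ∈ (Finset.Ico 1 (n + 2)).attach,
        ∑ τ ∈ Finset.univ.filter
            (fun τ : Equiv.Perm (Fin l.1) => IsKing τ ∧ StrictContains τ σ),
          kingMu l.1 τ
termination_by n _ => n
decreasing_by
  have := l.2
  simp only [Finset.mem_Ico] at this
  omega

theorem king_aux {n : ℕ} (σ : Equiv.Perm (Fin n)) (hk : IsKing σ)
    (H1 : ∀ i j k l : Fin n, i < j → j < k → k < l → σ k < σ i → σ i < σ l → σ l < σ j → False)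
    (H2 : ∀ i j k l : Fin n, i < j → j < k → k < l → σ j < σ l → σ l < σ i → σ i < σ k → False) :
    ∀ d : ℕ, ∀ a b : Fin n, a < b → (b : ℕ) - a = d →
      (∀ i j k : Fin n, a ≤ i → i ≤ b → a ≤ j → j ≤ b → σ i < σ k → σ k < σ j → a ≤ k ∧ k ≤ b) →
      False := by
  intro d
  induction d using Nat.strong_induction_on with
  | _ d ih =>
  intro a b hab hd hc
  have hne : ∀ i j : Fin n, i ≠ j → σ i ≠ σ j := fun i j h h' => h (σ.injective h')
  by_cases h1 : (b : ℕ) = a + 1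
  · apply hk a b h1
    have key : ∀ i j : Fin n, a ≤ i → i ≤ b → a ≤ j → j ≤ b → σ i < σ j →
        (σ j : ℕ) = σ i + 1 := by
      intro i j hi hi' hj hj' hij
      by_contra hcon
      have hlt : (σ i : ℕ) + 1 < n := by omega
      have e : σ (σ.symm ⟨σ i + 1, hlt⟩) = ⟨σ i + 1, hlt⟩ := σ.apply_symm_apply _
      generalize σ.symm ⟨σ i + 1, hlt⟩ = k at e
      have ev : (σ k : ℕ) = σ i + 1 := by rw [e]
      have := hc i j k hi hi' hj hj' (by omega) (by omega)
      have h3 : k = a ∨ k = b := by omega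
      have h4 : i = a ∨ i = b := by omega
      have h5 : j = a ∨ j = b := by omega
      rcases h3 with rfl | rfl <;> rcases h4 with rfl | rfl <;> rcases h5 with rfl | rfl <;> omega
    unfold fdist
    rcases lt_or_gt_of_ne (hne a b hab.ne) with h | h
    · have := key a b le_rfl hab.le hab.le le_rfl h
      omega
    · have := key b a hab.le le_rfl le_rfl hab.le h
      omega
  have hlt : (a : ℕ) + 1 < b := by omega
  -- the position right after `a`
  obtain ⟨a', ha'⟩ : ∃ a' : Fin n, (a' : ℕ) = a + 1 := ⟨⟨a + 1, by omega⟩, rfl⟩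
  rcases lt_or_gt_of_ne (hne a b hab.ne) with h | h
  · by_cases hq : ∃ q, a ≤ q ∧ q ≤ b ∧ σ q < σ a
    · obtain ⟨q, hq0, hmax⟩ :=
        Finset.exists_max_image (Finset.univ.filter fun q => a ≤ q ∧ q ≤ b ∧ σ q < σ a) id
          (by obtain ⟨q, hq⟩ := hq; exact ⟨q, by simpa using hq⟩)
      simp only [Finset.mem_filter, Finset.mem_univ, true_and] at hq0
      obtain ⟨hq1, hq2, hq3⟩ := hq0
      have hm : ∀ r, q < r → r ≤ b → σ a < σ r := by
        intro r hr hrb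
        by_contra hcon
        have h6 := hne a r (by omega)
        have := hmax r (by simp; omega)
        simp at this
        omega
      have hqa : q ≠ a := by rintro rfl; omega
      have hqb : q ≠ b := by rintro rfl; omega
      have hsep : ∀ i r, a ≤ i → i ≤ q → q < r → r ≤ b → σ i < σ r := by
        intro i r hi hi' hr hr'
        have h7 := hm r hr hr'
        by_contra hcon
        have h8 := hne i r (by omega)
        have hia : i ≠ a := by rintro rfl; omega
        have hiq : i ≠ q := by rintro rfl; omega
        exact H1 a i q r (by omega) (by omega) hr (by omega) (by omega) (by omega)
      refine ih ((q : ℕ) - a) (by omega) a q (by omega) rfl ?_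
      intro i j k hi hi' hj hj' hik hkj
      have h9 := hc i j k hi (by omega) hj (by omega) hik hkj
      refine ⟨h9.1, ?_⟩
      by_contra hcon
      have := hsep j k hj hj' (by omega) h9.2
      omega
    · push Not at hq
      refine ih ((b : ℕ) - a') (by omega) a' b (by omega) rfl ?_
      intro i j k hi hi' hj hj' hik hkj
      have h9 := hc i j k (by omega) hi' (by omega) hj' hik hkj
      refine ⟨?_, h9.2⟩
      by_contra hcon
      have : k = a := by omega
      subst this
      have := hq i (by omega) hi'
      omega
  · by_cases hq : ∃ q, a ≤ q ∧ q ≤ b ∧ σ a < σ q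
    · obtain ⟨q, hq0, hmax⟩ :=
        Finset.exists_max_image (Finset.univ.filter fun q => a ≤ q ∧ q ≤ b ∧ σ a < σ q) id
          (by obtain ⟨q, hq⟩ := hq; exact ⟨q, by simpa using hq⟩)
      simp only [Finset.mem_filter, Finset.mem_univ, true_and] at hq0
      obtain ⟨hq1, hq2, hq3⟩ := hq0
      have hm : ∀ r, q < r → r ≤ b → σ r < σ a := by
        intro r hr hrb
        by_contra hcon
        have h6 := hne a r (by omega)
        have := hmax r (by simp; omega)
        simp at this
        omega
      have hqa : q ≠ a := by rintro rfl; omega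
      have hqb : q ≠ b := by rintro rfl; omega
      have hsep : ∀ i r, a ≤ i → i ≤ q → q < r → r ≤ b → σ r < σ i := by
        intro i r hi hi' hr hr'
        have h7 := hm r hr hr'
        by_contra hcon
        have h8 := hne i r (by omega)
        have hia : i ≠ a := by rintro rfl; omega
        have hiq : i ≠ q := by rintro rfl; omega
        exact H2 a i q r (by omega) (by omega) hr (by omega) (by omega) (by omega)
      refine ih ((q : ℕ) - a) (by omega) a q (by omega) rfl ?_
      intro i j k hi hi' hj hj' hik hkj
      have h9 := hc i j k hi (by omega) hj (by omega) hik hkj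
      refine ⟨h9.1, ?_⟩
      by_contra hcon
      have := hsep i k hi hi' (by omega) h9.2
      omega
    · push Not at hq
      refine ih ((b : ℕ) - a') (by omega) a' b (by omega) rfl ?_
      intro i j k hi hi' hj hj' hik hkj
      have h9 := hc i j k (by omega) hi' (by omega) hj' hik hkj
      refine ⟨?_, h9.2⟩
      by_contra hcon
      have : k = a := by omega
      subst this
      have := hq j (by omega) hj'
      omega

theorem contains_of_four {n : ℕ} (p : Equiv.Perm (Fin 4)) (σ : Equiv.Perm (Fin n))
    (i j k l : Fin n) (hij : i < j) (hjk : j < k) (hkl : k < l)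
    (h : ∀ a b : Fin 4, p a < p b ↔ σ (![i, j, k, l] a) < σ (![i, j, k, l] b)) :
    Contains p σ := by
  have hm : StrictMono ![i, j, k, l] := by
    rw [Fin.strictMono_iff_lt_succ]
    intro x
    fin_cases x <;> simpa
  exact ⟨OrderEmbedding.ofStrictMono _ hm, h⟩

theorem king_contains {n : ℕ} (hn : 2 ≤ n) (σ : Equiv.Perm (Fin n)) (hk : IsKing σ) :
    Contains p2413 σ ∨ Contains p3142 σ := by
  by_contra hcon
  push Not at hcon
  refine king_aux σ hk ?_ ?_ (n - 1) ⟨0, by omega⟩ ⟨n - 1, by omega⟩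
    (by simp [Fin.lt_def]; omega) (by simp) ?_
  · intro i j k l hij hjk hkl h1 h2 h3
    refine hcon.1 (contains_of_four _ _ i j k l hij hjk hkl ?_)
    intro a b
    fin_cases a <;> fin_cases b <;> simp [p2413] <;> omega
  · intro i j k l hij hjk hkl h1 h2 h3
    refine hcon.2 (contains_of_four _ _ i j k l hij hjk hkl ?_)
    intro a b
    fin_cases a <;> fin_cases b <;> simp [p3142] <;> omega
  · intro i j k _ _ _ _ _ _
    simp [Fin.le_def]
    omega

theorem contains_trans {a b c : ℕ} {x : Equiv.Perm (Fin a)} {y : Equiv.Perm (Fin b)}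
    {z : Equiv.Perm (Fin c)} (h : Contains x y) (h' : Contains y z) : Contains x z := by
  obtain ⟨f, hf⟩ := h
  obtain ⟨g, hg⟩ := h'
  exact ⟨f.trans g, fun i j => (hf i j).trans (hg _ _)⟩

theorem contains_le {a b : ℕ} {x : Equiv.Perm (Fin a)} {y : Equiv.Perm (Fin b)}
    (h : Contains x y) : a ≤ b := by
  obtain ⟨f, _⟩ := h
  simpa using Fintype.card_le_of_injective f f.injective

theorem strictMono_fin_id {n : ℕ} (f : Fin n → Fin n) (hf : StrictMono f) : f = id := by
  apply (StrictMono.range_inj hf strictMono_id).1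
  rw [(Finite.surjective_of_injective hf.injective).range_eq, Set.range_id]

theorem contains_eq {a : ℕ} {x y : Equiv.Perm (Fin a)} (h : Contains x y) : y = x := by
  obtain ⟨f, hf⟩ := h
  have hid := strictMono_fin_id f f.strictMono
  simp only [hid, id] at hf
  have : StrictMono (fun i => y (x.symm i)) := by
    intro i j hij
    rw [← hf]
    simpa using hij
  have h2 := strictMono_fin_id _ this
  ext i
  have := congrFun h2 (x i)
  simp at this
  rw [this]

open scoped Classical in
/-- Level sum. -/
noncomputable def levelSum {n : ℕ} (σ : Equiv.Perm (Fin n)) (l : ℕ) : ℤ :=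
  ∑ τ ∈ Finset.univ.filter (fun τ : Equiv.Perm (Fin l) => IsKing τ ∧ StrictContains τ σ),
    kingMu l τ

theorem kingMu_eq (n : ℕ) (hn : 2 ≤ n) (σ : Equiv.Perm (Fin n)) :
    kingMu n σ = - ∑ l ∈ Finset.Ico 1 n, levelSum σ l := by
  obtain ⟨m, rfl⟩ : ∃ m, n = m + 2 := ⟨n - 2, by omega⟩
  rw [kingMu]
  exact congrArg Neg.neg (Finset.sum_attach _ (fun l => levelSum σ l))

theorem levelSum_one {n : ℕ} (hn : 2 ≤ n) (σ : Equiv.Perm (Fin n)) : levelSum σ 1 = 1 := by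
  classical
  unfold levelSum
  have : Finset.univ.filter (fun τ : Equiv.Perm (Fin 1) => IsKing τ ∧ StrictContains τ σ)
      = {1} := by
    ext τ
    have e : τ = 1 := Subsingleton.elim _ _
    subst e
    simp only [Finset.mem_filter, Finset.mem_univ, true_and, Finset.mem_singleton, iff_true]
    refine ⟨fun i j h => by omega, ⟨OrderEmbedding.ofStrictMono (fun _ => ⟨0, by omega⟩) ?_, ?_⟩,
      by omega⟩
    · intro i j h; omega
    · intro i j
      have : i = j := Subsingleton.elim _ _
      subst this
      simp
  rw [this, Finset.sum_singleton, kingMu]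

theorem levelSum_small {n : ℕ} (σ : Equiv.Perm (Fin n)) (l : ℕ) (h2 : 2 ≤ l) (h4 : l < 4) :
    levelSum σ l = 0 := by
  unfold levelSum
  apply Finset.sum_eq_zero
  intro τ hτ
  simp only [Finset.mem_filter, Finset.mem_univ, true_and] at hτ
  rcases king_contains h2 τ hτ.1 with h | h
  · have := contains_le h; omega
  · have := contains_le h; omega

theorem kingMu_four (σ : Equiv.Perm (Fin 4)) : kingMu 4 σ = -1 := by
  rw [kingMu_eq 4 (by omega)]
  have : Finset.Ico 1 4 = {1, 2, 3} := by decide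
  rw [this]
  simp [levelSum_one, levelSum_small]

theorem mu_aux (p q : Equiv.Perm (Fin 4)) (hp : IsKing p)
    (hpq : ∀ n, 2 ≤ n → ∀ σ : Equiv.Perm (Fin n), IsKing σ → Contains p σ ∨ Contains q σ)
    (n : ℕ) : 4 < n → ∀ π : Equiv.Perm (Fin n), IsKing π → ¬ Contains q π → kingMu n π = 0 := by
  classical
  induction n using Nat.strong_induction_on with
  | _ n ih =>
  intro hn π hk hq
  have hcp : Contains p π := (hpq n (by omega) π hk).resolve_right hq
  have h4 : levelSum π 4 = -1 := by
    unfold levelSum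
    have : Finset.univ.filter (fun τ : Equiv.Perm (Fin 4) => IsKing τ ∧ StrictContains τ π)
        = {p} := by
      ext τ
      simp only [Finset.mem_filter, Finset.mem_univ, true_and, Finset.mem_singleton]
      constructor
      · rintro ⟨h1, h2⟩
        rcases hpq 4 (by omega) τ h1 with h | h
        · exact contains_eq h
        · exact absurd (contains_trans h h2.1) hq
      · rintro rfl
        exact ⟨hp, hcp, hn⟩
    rw [this, Finset.sum_singleton, kingMu_four]
  have h5 : ∀ l ∈ Finset.Ico 5 n, levelSum π l = 0 := by
    intro l hl
    rw [Finset.mem_Ico] at hl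
    unfold levelSum
    apply Finset.sum_eq_zero
    intro τ hτ
    simp only [Finset.mem_filter, Finset.mem_univ, true_and] at hτ
    exact ih l hl.2 (by omega) τ hτ.1 fun h => hq (contains_trans h hτ.2.1)
  rw [kingMu_eq n (by omega),
    ← Finset.sum_Ico_consecutive _ (show 1 ≤ 5 by omega) (show 5 ≤ n by omega),
    Finset.sum_eq_zero h5]
  have : Finset.Ico 1 5 = {1, 2, 3, 4} := by decide
  rw [this]
  have h1 := levelSum_one (by omega) π
  simp [h1, levelSum_small, h4]

/-- if a king of length `n > 4` does not contain [2413] or does not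
contain [3142], then its Möbius function value is `0`. -/
theorem mu_eq_zero_of_avoids (n : ℕ) (hn : 4 < n) (π : Equiv.Perm (Fin n)) (hπ : IsKing π)
    (h : ¬ Contains p2413 π ∨ ¬ Contains p3142 π) :
    kingMu n π = 0 := by
  rcases h with h | h
  · refine mu_aux p3142 p2413 ?_ (fun n hn σ hσ => (king_contains hn σ hσ).symm) n hn π hπ h
    unfold IsKing; decide
  · refine mu_aux p2413 p3142 ?_ (fun n hn σ hσ => king_contains hn σ hσ) n hn π hπ h
    unfold IsKing; decide
end

section
/- For every π ∈ K_5, μ(π) = 1 if π ∈ ℍ, and μ(π) = 0 otherwise. -/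
open Equiv

/-- The permutation [24153] (0-based one-line notation [1,3,0,4,2]). -/
def p24153 : Equiv.Perm (Fin 5) :=
  ⟨![1, 3, 0, 4, 2], ![2, 0, 4, 1, 3], by intro x; fin_cases x <;> rfl, by intro x; fin_cases x <;> rfl⟩

/-- The permutation [35142] (0-based one-line notation [2,4,0,3,1]). -/
def p35142 : Equiv.Perm (Fin 5) :=
  ⟨![2, 4, 0, 3, 1], ![2, 4, 0, 3, 1], by intro x; fin_cases x <;> rfl, by intro x; fin_cases x <;> rfl⟩

/-- The permutation [42513] (0-based one-line notation [3,1,4,0,2]). -/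
def p42513 : Equiv.Perm (Fin 5) :=
  ⟨![3, 1, 4, 0, 2], ![3, 1, 4, 0, 2], by intro x; fin_cases x <;> rfl, by intro x; fin_cases x <;> rfl⟩

/-- The permutation [31524] (0-based one-line notation [2,0,4,1,3]). -/
def p31524 : Equiv.Perm (Fin 5) :=
  ⟨![2, 0, 4, 1, 3], ![1, 3, 0, 4, 2], by intro x; fin_cases x <;> rfl, by intro x; fin_cases x <;> rfl⟩

/-- The set ℍ = {[24153],[35142],[42513],[31524]}. -/
def Hset : Set (Equiv.Perm (Fin 5)) := {p24153, p35142, p42513, p31524}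

instance kingDec {n : ℕ} (σ : Equiv.Perm (Fin n)) : Decidable (IsKing σ) := by
  unfold IsKing; infer_instance

/-- explicit containment of a length-4 pattern in a length-5 permutation -/
def C4 (p : Equiv.Perm (Fin 4)) (σ : Equiv.Perm (Fin 5)) : Prop :=
  ∃ i : Fin 5, ∀ a b : Fin 4, p a < p b ↔ σ (i.succAbove a) < σ (i.succAbove b)

instance c4Dec (p : Equiv.Perm (Fin 4)) (σ : Equiv.Perm (Fin 5)) : Decidable (C4 p σ) := by
  unfold C4; infer_instance

set_option synthInstance.maxSize 2000 in
set_option synthInstance.maxHeartbeats 400000 in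
theorem emb_aux : ∀ a b c d : Fin 5, a < b → b < c → c < d →
    ∃ i : Fin 5, i.succAbove (0 : Fin 4) = a ∧ i.succAbove (1 : Fin 4) = b ∧
      i.succAbove (2 : Fin 4) = c ∧ i.succAbove (3 : Fin 4) = d := by
  decide +kernel

theorem contains_iff (p : Equiv.Perm (Fin 4)) (σ : Equiv.Perm (Fin 5)) :
    Contains p σ ↔ C4 p σ := by
  constructor
  · rintro ⟨f, hf⟩
    obtain ⟨i, h0, h1, h2, h3⟩ := emb_aux (f 0) (f 1) (f 2) (f 3)
      (f.strictMono (by decide)) (f.strictMono (by decide)) (f.strictMono (by decide))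
    have h : ∀ a : Fin 4, i.succAbove a = f a := by
      intro a
      fin_cases a <;> assumption
    refine ⟨i, fun a b => ?_⟩
    rw [h, h]
    exact hf a b
  · rintro ⟨i, hi⟩
    exact ⟨Fin.succAboveOrderEmb i, hi⟩

theorem king2 : ∀ τ : Equiv.Perm (Fin 2), ¬ IsKing τ := by decide +kernel
theorem king3 : ∀ τ : Equiv.Perm (Fin 3), ¬ IsKing τ := by decide +kernel
theorem king4 : ∀ τ : Equiv.Perm (Fin 4), IsKing τ ↔ (τ = p2413 ∨ τ = p3142) := by
  decide +kernel

theorem king5 : ∀ π : Equiv.Perm (Fin 5), IsKing π →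
    (((π = p24153 ∨ π = p35142 ∨ π = p42513 ∨ π = p31524) ∧ C4 p2413 π ∧ C4 p3142 π) ∨
     (¬ (π = p24153 ∨ π = p35142 ∨ π = p42513 ∨ π = p31524) ∧
       ((C4 p2413 π ∧ ¬ C4 p3142 π) ∨ (¬ C4 p2413 π ∧ C4 p3142 π)))) := by
  decide +kernel

open scoped Classical in
/-- the level sum -/
noncomputable def lev {n : ℕ} (σ : Equiv.Perm (Fin n)) (l : ℕ) : ℤ :=
  ∑ τ ∈ Finset.univ.filter (fun τ : Equiv.Perm (Fin l) => IsKing τ ∧ StrictContains τ σ),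
    kingMu l τ

theorem mu_rec (n : ℕ) (σ : Equiv.Perm (Fin (n + 2))) :
    kingMu (n + 2) σ = - ∑ l ∈ Finset.Ico 1 (n + 2), lev σ l := by
  rw [kingMu, ← Finset.sum_attach (Finset.Ico 1 (n + 2))]
  congr 1
  refine Finset.sum_congr rfl fun l _ => ?_
  unfold lev
  refine Finset.sum_congr ?_ fun _ _ => rfl
  ext τ
  simp only [Finset.mem_filter]

theorem lev1 {n : ℕ} (hn : 1 < n) (σ : Equiv.Perm (Fin n)) : lev σ 1 = 1 := by
  classical
  have h : ∀ τ : Equiv.Perm (Fin 1), IsKing τ ∧ StrictContains τ σ := by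
    intro τ
    refine ⟨fun i j h => by omega, ⟨?_, hn⟩⟩
    refine ⟨OrderEmbedding.ofStrictMono (fun _ => ⟨0, by omega⟩) ?_, ?_⟩
    · intro a b hab; exact absurd hab (by simp [Subsingleton.elim a b])
    · intro a b; simp [Subsingleton.elim a b]
  unfold lev
  rw [Finset.filter_true_of_mem (fun τ _ => h τ)]
  simp [kingMu]

theorem lev2 {n : ℕ} (σ : Equiv.Perm (Fin n)) : lev σ 2 = 0 := by
  simp [lev, king2]

theorem lev3 {n : ℕ} (σ : Equiv.Perm (Fin n)) : lev σ 3 = 0 := by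
  simp [lev, king3]

theorem mu4 (τ : Equiv.Perm (Fin 4)) : kingMu 4 τ = -1 := by
  have h : Finset.Ico 1 4 = {1, 2, 3} := by decide
  rw [mu_rec 2 τ]
  simp [h, lev1, lev2, lev3]

theorem ne4 : p2413 ≠ p3142 := by decide +kernel

open scoped Classical in
theorem lev4 (σ : Equiv.Perm (Fin 5)) : lev σ 4 =
    (if C4 p2413 σ then -1 else 0) + (if C4 p3142 σ then -1 else 0) := by
  have h : Finset.univ.filter
      (fun τ : Equiv.Perm (Fin 4) => IsKing τ ∧ StrictContains τ σ) =
      ({p2413, p3142} : Finset (Equiv.Perm (Fin 4))).filter (fun τ => C4 τ σ) := by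
    ext τ
    simp [king4, StrictContains, contains_iff]
  unfold lev
  rw [h, Finset.sum_filter, Finset.sum_pair ne4, mu4, mu4]

theorem mu5 (σ : Equiv.Perm (Fin 5)) : kingMu 5 σ = - (1 + lev σ 4) := by
  have h : Finset.Ico 1 5 = {1, 2, 3, 4} := by decide
  rw [mu_rec 3 σ]
  simp [h, lev1, lev2, lev3]

/-- for `π ∈ K_5`, `μ(π) = 1` if `π ∈ ℍ` and `μ(π) = 0` otherwise. -/
theorem mu_on_K5 (π : Equiv.Perm (Fin 5)) (hπ : IsKing π) :
    (π ∈ Hset → kingMu 5 π = 1) ∧ (π ∉ Hset → kingMu 5 π = 0) := by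
  rw [mu5, lev4]
  have hm : π ∈ Hset ↔ (π = p24153 ∨ π = p35142 ∨ π = p42513 ∨ π = p31524) := Iff.rfl
  rw [hm]
  rcases king5 π hπ with ⟨h, h1, h2⟩ | ⟨h, ⟨h1, h2⟩ | ⟨h1, h2⟩⟩
  · simp only [h1, h2, if_true]
    exact ⟨fun _ => by norm_num, fun h' => absurd h h'⟩
  · simp only [h1, h2, if_true, if_false]
    exact ⟨fun h' => absurd h' h, fun _ => by norm_num⟩
  · simp only [h1, h2, if_true, if_false]
    exact ⟨fun h' => absurd h' h, fun _ => by norm_num⟩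
end

section
/- Let σ be a permutation of length n > 1. Then σ is a king permutation if and only if br(σ) ≥ 3, where d_σ(i,j) = |i−j| + |σ(i)−σ(j)| and br(σ) = min over all pairs of distinct indices i,j ∈ {1,…,n} of d_σ(i,j). -/
open Equiv

/-- The breadth of `σ`: the minimum of `d_σ(i,j) = |i−j| + |σ(i)−σ(j)|` over all
pairs of distinct indices. -/
noncomputable def breadth {n : ℕ} (σ : Equiv.Perm (Fin n)) : ℕ :=
  sInf {d : ℕ | ∃ i j : Fin n, i ≠ j ∧ d = fdist i j + fdist (σ i) (σ j)}

/-- a permutation of length `n > 1` is a king iff its breadth is at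
least `3`. -/
theorem isKing_iff_breadth_ge_three (n : ℕ) (hn : 1 < n) (σ : Equiv.Perm (Fin n)) :
    IsKing σ ↔ 3 ≤ breadth σ := by
  have hne : {d : ℕ | ∃ i j : Fin n, i ≠ j ∧ d = fdist i j + fdist (σ i) (σ j)}.Nonempty :=
    ⟨_, ⟨0, by omega⟩, ⟨1, hn⟩, by simp, rfl⟩
  constructor
  · intro hk
    obtain ⟨i, j, hij, hd⟩ := Nat.sInf_mem hne
    have hd' : breadth σ = fdist i j + fdist (σ i) (σ j) := hd
    rw [hd']
    have hs : (σ i : ℕ) ≠ (σ j : ℕ) := fun h => hij (σ.injective (Fin.ext h))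
    have hij' : (i : ℕ) ≠ (j : ℕ) := fun h => hij (Fin.ext h)
    have h1 := hk i j
    have h2 := hk j i
    unfold fdist at *
    omega
  · intro hb i j hij h1
    have hle : breadth σ ≤ fdist i j + fdist (σ i) (σ j) :=
      Nat.sInf_le ⟨i, j, fun h => by subst h; omega, rfl⟩
    have h2 : fdist i j = 1 := by unfold fdist; omega
    omega
end
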